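/- arXiv:2010.11643 — 2 statements merged into one kernel-verified Lean document; each statement's English description precedes it below -/
import Mathlib

section
/- Let p be a strictly positive probability distribution on a chain of n sites, and suppose there exists a function ξ: ℕ → ℝ such that for every partition of the chain into three contiguous blocks A, B, C (in this order) one has I_p(A:C|B) ≤ ξ(|B|), where ξ does not depend on |A| or |C|. Then for every 1 ≤ ℓ ≤ n−2, the (ℓ+1)-local Gibbs approximation p^ℓ satisfies S(p ‖ p^ℓ) ≤ (n−ℓ−1)·ξ(ℓ) ≤ n·ξ(ℓ). -/
/-!
The proof works with the operator `f ↦ fullMargin f S`, which sums out the sites outside `S` and is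
regarded as acting on functions of full configurations. It is symmetric for the counting pairing
`Σ_x f x * g x` (`sum_mul_fullMargin`), and `S`-marginalisation after `T`-marginalisation is, up to
the number of configurations outside `S ∪ T`, marginalisation onto `S ∩ T` (`fullMargin_fullMargin`).
Together these give the reweighting identity `sum_mul_fullMargin_div`, which has two consequences.

* The partition function of `h^ℓ` is `1`: summing the Markov-chain product
  `∏ p_{m,…,m+ℓ} / ∏ p_{m+1,…,m+ℓ}` over the last site removes the last pair of factors
  (`sum_localWeight`). Hence `log p^ℓ = -h^ℓ`, and `S(p‖p^ℓ)` is an alternating sum of block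
  entropies (`relEnt_gibbsApprox_eq`).
* Strong subadditivity `H(S ∩ T) + H(S ∪ T) ≤ H(S) + H(T)` (`blockEntropy_submodular`), from
  `log t ≤ t - 1`.

Inserting the telescoping sum of `H(0,…,m+ℓ+1) - H(0,…,m+ℓ)` writes `S(p‖p^ℓ)` as a sum of
`n - ℓ - 1` conditional mutual informations of `{0,…,m}` and `{m+ℓ+1}` given `{m+1,…,m+ℓ}`.
By strong subadditivity each of them grows when `{m+ℓ+1}` is enlarged to the whole remaining chain,
where it is at most `ξ ℓ` by hypothesis. Finally `0 ≤ ξ ℓ`, as one sees by taking `A` empty.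
-/

open scoped BigOperators

noncomputable section

variable {n : ℕ} {X : Fin n → Type*}

/-- The marginal of `p` on the block `S`, as a function of a configuration of the block:
`p_S(y) = Σ_{z : z|_S = y} p(z)`. -/
def blockMargin [∀ i, Fintype (X i)] [∀ i, DecidableEq (X i)]
    (p : (∀ i, X i) → ℝ) (S : Finset (Fin n)) (y : ∀ i : S, X i) : ℝ :=
  ∑ z : ∀ i, X i, if ∀ i : S, z i.1 = y i then p z else 0

/-- The Shannon entropy (natural logarithm) of the marginal of `p` on the block `S`. -/
def blockEntropy [∀ i, Fintype (X i)] [∀ i, DecidableEq (X i)]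
    (p : (∀ i, X i) → ℝ) (S : Finset (Fin n)) : ℝ :=
  -∑ y : ∀ i : S, X i, blockMargin p S y * Real.log (blockMargin p S y)

/-- The conditional mutual information `I(A:C|B) = H(AB) + H(BC) − H(B) − H(ABC)`
of the distribution `p`. -/
def cmi [∀ i, Fintype (X i)] [∀ i, DecidableEq (X i)]
    (p : (∀ i, X i) → ℝ) (A B C : Finset (Fin n)) : ℝ :=
  blockEntropy p (A ∪ B) + blockEntropy p (B ∪ C) - blockEntropy p B
    - blockEntropy p (A ∪ B ∪ C)

/-- The marginal of `p` on `S`, evaluated at the restriction of a full configuration `x`. -/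
def fullMargin [∀ i, Fintype (X i)] [∀ i, DecidableEq (X i)]
    (p : (∀ i, X i) → ℝ) (S : Finset (Fin n)) (x : ∀ i, X i) : ℝ :=
  ∑ z : ∀ i, X i, if ∀ i ∈ S, z i = x i then p z else 0

/-- The contiguous block `{a, …, b}` of sites (`0`-indexed). -/
def chainInterval (n : ℕ) (a b : ℕ) : Finset (Fin n) :=
  Finset.univ.filter fun i => a ≤ (i : ℕ) ∧ (i : ℕ) ≤ b

/-- The `(ℓ+1)`-local Hamiltonian
`h^ℓ = Σ_{j=1}^{n−ℓ} h_{j,…,j+ℓ} − Σ_{j=1}^{n−ℓ−1} h_{j+1,…,j+ℓ}` (with sites `0`-indexed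
here), where `h_{j,…,k} := −log p_{j,…,k}`. -/
def localHam [∀ i, Fintype (X i)] [∀ i, DecidableEq (X i)]
    (p : (∀ i, X i) → ℝ) (ℓ : ℕ) (x : ∀ i, X i) : ℝ :=
  (∑ m ∈ Finset.range (n - ℓ), -Real.log (fullMargin p (chainInterval n m (m + ℓ)) x))
    - ∑ m ∈ Finset.range (n - ℓ - 1),
        -Real.log (fullMargin p (chainInterval n (m + 1) (m + ℓ)) x)

/-- The `(ℓ+1)`-local Gibbs distribution `p^ℓ(x) = e^{−h^ℓ(x)} / Σ_{x'} e^{−h^ℓ(x')}`. -/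
def gibbsApprox [∀ i, Fintype (X i)] [∀ i, DecidableEq (X i)]
    (p : (∀ i, X i) → ℝ) (ℓ : ℕ) (x : ∀ i, X i) : ℝ :=
  Real.exp (-localHam p ℓ x) / ∑ x' : ∀ i, X i, Real.exp (-localHam p ℓ x')

/-- The relative entropy `S(p‖q) = Σ_x p(x) log (p(x)/q(x))` (natural logarithm). -/
def relEnt [∀ i, Fintype (X i)] (p q : (∀ i, X i) → ℝ) : ℝ :=
  ∑ x : ∀ i, X i, p x * Real.log (p x / q x)

/-! ### Marginalisation as an operator -/

/-- The number `∏_{i ∉ S} |X_i|` of configurations of the sites outside `S`. -/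
def outerCard (X : Fin n → Type*) [∀ i, Fintype (X i)] (S : Finset (Fin n)) : ℝ :=
  ∏ i, if i ∈ S then 1 else (Fintype.card (X i) : ℝ)

lemma outerCard_pos [∀ i, Fintype (X i)] [∀ i, Nonempty (X i)] (S : Finset (Fin n)) :
    0 < outerCard X S := by
  refine Finset.prod_pos fun i _ => ?_
  split_ifs
  · exact one_pos
  · exact_mod_cast Fintype.card_pos

lemma outerCard_univ [∀ i, Fintype (X i)] : outerCard X Finset.univ = 1 := by
  simp [outerCard]

/-- `F` depends only on the coordinates in `S`. -/
def DependsOnBlock (F : (∀ i, X i) → ℝ) (S : Finset (Fin n)) : Prop :=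
  ∀ x y : ∀ i, X i, (∀ i ∈ S, x i = y i) → F x = F y

lemma DependsOnBlock.mono {F : (∀ i, X i) → ℝ} {S T : Finset (Fin n)}
    (h : DependsOnBlock F S) (hST : S ⊆ T) : DependsOnBlock F T :=
  fun x y hxy => h x y fun i hi => hxy i (hST hi)

lemma DependsOnBlock.mul {F G : (∀ i, X i) → ℝ} {S : Finset (Fin n)}
    (hF : DependsOnBlock F S) (hG : DependsOnBlock G S) :
    DependsOnBlock (fun x => F x * G x) S :=
  fun x y h => by simp only [hF x y h, hG x y h]

lemma DependsOnBlock.div {F G : (∀ i, X i) → ℝ} {S : Finset (Fin n)}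
    (hF : DependsOnBlock F S) (hG : DependsOnBlock G S) :
    DependsOnBlock (fun x => F x / G x) S :=
  fun x y h => by simp only [hF x y h, hG x y h]

section
variable [∀ i, Fintype (X i)] [∀ i, DecidableEq (X i)]

lemma fullMargin_one (S : Finset (Fin n)) (x : ∀ i, X i) :
    fullMargin (fun _ => 1) S x = outerCard X S := by
  have h : (Finset.univ.filter fun z : ∀ i, X i => ∀ i ∈ S, z i = x i)
      = Fintype.piFinset fun i => if i ∈ S then {x i} else Finset.univ := by
    ext z
    simp only [Finset.mem_filter, Finset.mem_univ, true_and, Fintype.mem_piFinset]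
    refine forall_congr' fun i => ?_
    by_cases hi : i ∈ S <;> simp [hi]
  unfold fullMargin outerCard
  rw [Finset.sum_boole, h, Fintype.card_piFinset]
  push_cast
  refine Finset.prod_congr rfl fun i _ => ?_
  by_cases hi : i ∈ S <;> simp [hi]

/-- Marginalisation onto `S` is self-adjoint for the counting pairing. -/
lemma sum_mul_fullMargin (f g : (∀ i, X i) → ℝ) (S : Finset (Fin n)) :
    ∑ x, f x * fullMargin g S x = ∑ x, fullMargin f S x * g x := by
  simp only [fullMargin, Finset.mul_sum, Finset.sum_mul]
  rw [Finset.sum_comm]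
  refine Finset.sum_congr rfl fun z _ => Finset.sum_congr rfl fun x _ => ?_
  have : (∀ i ∈ S, z i = x i) ↔ (∀ i ∈ S, x i = z i) :=
    forall₂_congr fun i _ => eq_comm
  by_cases h : ∀ i ∈ S, x i = z i
  · rw [if_pos (this.2 h), if_pos h]
  · rw [if_neg (mt this.1 h), if_neg h]; simp

lemma dependsOnBlock_fullMargin (f : (∀ i, X i) → ℝ) (S : Finset (Fin n)) :
    DependsOnBlock (fullMargin f S) S := by
  intro x y h
  refine Finset.sum_congr rfl fun z _ => ?_
  have : (∀ i ∈ S, z i = x i) ↔ (∀ i ∈ S, z i = y i) :=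
    forall₂_congr fun i hi => by rw [h i hi]
  simp only [this]

lemma DependsOnBlock.fullMargin_eq {F : (∀ i, X i) → ℝ} {S : Finset (Fin n)}
    (hF : DependsOnBlock F S) (x : ∀ i, X i) :
    fullMargin F S x = outerCard X S * F x := by
  rw [← fullMargin_one S x]
  simp only [fullMargin, Finset.sum_mul]
  refine Finset.sum_congr rfl fun z _ => ?_
  split_ifs with h
  · rw [hF z x h, one_mul]
  · simp

/-- Composing marginalisations: the number of `z` with `z = x` on `S` and `z = w` on `T` is
`outerCard X (S ∪ T)` if `x` and `w` agree on `S ∩ T`, and `0` otherwise. -/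
lemma fullMargin_fullMargin (f : (∀ i, X i) → ℝ) (S T : Finset (Fin n)) (x : ∀ i, X i) :
    fullMargin (fullMargin f T) S x = outerCard X (S ∪ T) * fullMargin f (S ∩ T) x := by
  have h1 : fullMargin (fullMargin f T) S x
      = ∑ w, ∑ z : ∀ i, X i,
          if (∀ i ∈ S, z i = x i) ∧ (∀ i ∈ T, w i = z i) then f w else 0 := by
    rw [Finset.sum_comm]
    refine Finset.sum_congr rfl fun z _ => ?_
    by_cases h : ∀ i ∈ S, z i = x i
    · rw [if_pos h, fullMargin]
      refine Finset.sum_congr rfl fun w _ => ?_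
      simp only [and_iff_right h]
    · rw [if_neg h]
      exact (Finset.sum_eq_zero fun w _ => if_neg fun hw => h hw.1).symm
  rw [h1]
  conv_rhs => rw [fullMargin, Finset.mul_sum]
  refine Finset.sum_congr rfl fun w _ => ?_
  by_cases h : ∀ i ∈ S ∩ T, w i = x i
  · rw [if_pos h]
    -- `x` on `S` and `w` on `T` are compatible, so they glue to a configuration on `S ∪ T`
    rw [← fullMargin_one (S ∪ T) (fun i => if i ∈ S then x i else w i), fullMargin,
      Finset.sum_mul]
    refine Finset.sum_congr rfl fun z _ => ?_
    have : ((∀ i ∈ S, z i = x i) ∧ (∀ i ∈ T, w i = z i)) ↔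
        ∀ i ∈ S ∪ T, z i = if i ∈ S then x i else w i := by
      constructor
      · rintro ⟨hS, hT⟩ i hi
        by_cases hiS : i ∈ S
        · simpa [hiS] using hS i hiS
        · have hiT : i ∈ T := by simpa [hiS] using hi
          simpa [hiS] using (hT i hiT).symm
      · intro H
        have hS : ∀ i ∈ S, z i = x i := fun i hi => by
          simpa [hi] using H i (Finset.mem_union_left _ hi)
        refine ⟨hS, fun i hi => ?_⟩
        by_cases hiS : i ∈ S
        · rw [hS i hiS, h i (Finset.mem_inter.2 ⟨hiS, hi⟩)]
        · simpa [hiS] using (H i (Finset.mem_union_right _ hi)).symm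
    by_cases hc : (∀ i ∈ S, z i = x i) ∧ (∀ i ∈ T, w i = z i)
    · rw [if_pos hc, if_pos (this.1 hc), one_mul]
    · rw [if_neg hc, if_neg (mt this.2 hc), zero_mul]
  · rw [if_neg h, mul_zero]
    refine Finset.sum_eq_zero fun z _ => if_neg ?_
    rintro ⟨hS, hT⟩
    refine h fun i hi => ?_
    rw [hT i (Finset.mem_inter.1 hi).2, hS i (Finset.mem_inter.1 hi).1]

lemma fullMargin_pos {p : (∀ i, X i) → ℝ} (hpos : ∀ x, 0 < p x) (S : Finset (Fin n))
    (x : ∀ i, X i) : 0 < fullMargin p S x := by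
  refine Finset.sum_pos' (fun z _ => ?_) ⟨x, Finset.mem_univ _, ?_⟩
  · split_ifs
    · exact (hpos z).le
    · exact le_rfl
  · simp [hpos x]

lemma fullMargin_univ (p : (∀ i, X i) → ℝ) (x : ∀ i, X i) :
    fullMargin p Finset.univ x = p x := by
  simp [fullMargin, ← funext_iff]

lemma sum_fullMargin {p : (∀ i, X i) → ℝ} (hsum : ∑ x, p x = 1) (S : Finset (Fin n)) :
    ∑ x, fullMargin p S x = outerCard X S := by
  have h := sum_mul_fullMargin (fun _ => 1) p S
  simp only [one_mul, fullMargin_one] at h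
  rw [h, ← Finset.mul_sum, hsum, mul_one]

/-- Multiplying an `S`-local function by the conditional distribution `p_T / p_{S ∩ T}` does not
change its total mass, up to the factors counting configurations of the irrelevant sites. -/
lemma sum_mul_fullMargin_div [∀ i, Nonempty (X i)] {p : (∀ i, X i) → ℝ} (hpos : ∀ x, 0 < p x)
    {S T : Finset (Fin n)} {F : (∀ i, X i) → ℝ} (hF : DependsOnBlock F S) :
    outerCard X S * ∑ x, F x * (fullMargin p T x / fullMargin p (S ∩ T) x)
      = outerCard X (S ∪ T) * ∑ x, F x := by
  have hG : DependsOnBlock (fun x => F x / fullMargin p (S ∩ T) x) S :=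
    hF.div ((dependsOnBlock_fullMargin p _).mono Finset.inter_subset_left)
  have h := sum_mul_fullMargin (fun x => F x / fullMargin p (S ∩ T) x) (fullMargin p T) S
  simp only [hG.fullMargin_eq, fullMargin_fullMargin] at h
  rw [Finset.mul_sum, Finset.mul_sum]
  calc _ = _ := Finset.sum_congr rfl fun x _ => by ring
    _ = _ := h.symm
    _ = _ := Finset.sum_congr rfl fun x _ => by
      have := (fullMargin_pos hpos (S ∩ T) x).ne'
      field_simp

/-! ### Entropies -/

/-- The entropy of a block as the `p`-average of `-log p_S`, a sum over full configurations. -/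
lemma blockEntropy_eq (p : (∀ i, X i) → ℝ) (S : Finset (Fin n)) :
    blockEntropy p S = -∑ x, p x * Real.log (fullMargin p S x) := by
  have hfm : ∀ x, fullMargin p S x = blockMargin p S (fun i => x i) := fun x =>
    Finset.sum_congr rfl fun z _ => by
      have : (∀ i ∈ S, z i = x i) ↔ ∀ i : S, z i.1 = x i :=
        ⟨fun h i => h i i.2, fun h i hi => h ⟨i, hi⟩⟩
      simp only [this]
  unfold blockEntropy
  congr 1
  have h1 : ∀ y : ∀ i : S, X i, blockMargin p S y * Real.log (blockMargin p S y)
      = ∑ z : ∀ i, X i, if (fun i : S => z i) = y then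
          p z * Real.log (blockMargin p S y) else 0 := by
    intro y
    conv_lhs => enter [1]; rw [blockMargin]
    rw [Finset.sum_mul]
    refine Finset.sum_congr rfl fun z _ => ?_
    by_cases h : ∀ i : S, z i.1 = y i
    · rw [if_pos h, if_pos (funext h)]
    · rw [if_neg h, if_neg (mt congrFun h), zero_mul]
  simp only [h1, hfm]
  rw [Finset.sum_comm]
  refine Finset.sum_congr rfl fun z _ => ?_
  rw [Finset.sum_ite_eq]
  simp

/-- Strong subadditivity of the Shannon entropy. -/
lemma blockEntropy_submodular [∀ i, Nonempty (X i)] {p : (∀ i, X i) → ℝ}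
    (hpos : ∀ x, 0 < p x) (hsum : ∑ x, p x = 1) (S T : Finset (Fin n)) :
    blockEntropy p (S ∩ T) + blockEntropy p (S ∪ T) ≤ blockEntropy p S + blockEntropy p T := by
  -- `r` is the ratio of the Markov approximation of the `S ∪ T` marginal to that marginal
  set r : (∀ i, X i) → ℝ := fun x =>
    fullMargin p S x * (fullMargin p T x / fullMargin p (S ∩ T) x) / fullMargin p (S ∪ T) x
    with hr
  have hrdep : DependsOnBlock r (S ∪ T) :=
    (((dependsOnBlock_fullMargin p S).mono Finset.subset_union_left).mul
      (((dependsOnBlock_fullMargin p T).mono Finset.subset_union_right).div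
      ((dependsOnBlock_fullMargin p (S ∩ T)).mono
        (Finset.inter_subset_left.trans Finset.subset_union_left)))).div
      (dependsOnBlock_fullMargin p _)
  have hmass : ∑ x, p x * r x = 1 := by
    have h1 := sum_mul_fullMargin p r (S ∪ T)
    simp only [hrdep.fullMargin_eq] at h1
    have h2 : ∑ x, fullMargin p (S ∪ T) x * r x
        = ∑ x, fullMargin p S x * (fullMargin p T x / fullMargin p (S ∩ T) x) :=
      Finset.sum_congr rfl fun x _ => by
        have := (fullMargin_pos hpos (S ∪ T) x).ne'
        simp only [hr]
        field_simp
    have h3 := sum_mul_fullMargin_div hpos (T := T) (dependsOnBlock_fullMargin p S)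
    rw [sum_fullMargin hsum] at h3
    have h4 : ∑ x, p x * (outerCard X (S ∪ T) * r x)
        = outerCard X (S ∪ T) * ∑ x, p x * r x := by
      rw [Finset.mul_sum]
      exact Finset.sum_congr rfl fun x _ => by ring
    rw [h4, h2] at h1
    have hS := outerCard_pos (X := X) S
    have hU := outerCard_pos (X := X) (S ∪ T)
    rw [← h1] at h3
    have : outerCard X S * outerCard X (S ∪ T) * (∑ x, p x * r x)
        = outerCard X S * outerCard X (S ∪ T) * 1 := by linarith
    exact mul_left_cancel₀ (mul_pos hS hU).ne' this
  have hlog : ∑ x, p x * Real.log (r x) ≤ 0 := by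
    calc ∑ x, p x * Real.log (r x) ≤ ∑ x, (p x * r x - p x) := by
          refine Finset.sum_le_sum fun x _ => ?_
          have hrx : 0 < r x := by
            have h1 := fullMargin_pos hpos S x
            have h2 := fullMargin_pos hpos T x
            have h3 := fullMargin_pos hpos (S ∩ T) x
            have h4 := fullMargin_pos hpos (S ∪ T) x
            positivity
          have := mul_le_mul_of_nonneg_left (Real.log_le_sub_one_of_pos hrx) (hpos x).le
          linarith
      _ = 0 := by rw [Finset.sum_sub_distrib, hmass, hsum, sub_self]
  have hexp : ∑ x, p x * Real.log (r x)
      = -blockEntropy p S - blockEntropy p T + blockEntropy p (S ∩ T)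
        + blockEntropy p (S ∪ T) := by
    simp only [blockEntropy_eq, neg_neg]
    rw [sub_neg_eq_add, ← sub_eq_add_neg, ← sub_eq_add_neg, ← Finset.sum_add_distrib,
      ← Finset.sum_sub_distrib, ← Finset.sum_sub_distrib]
    refine Finset.sum_congr rfl fun x _ => ?_
    have h1 := (fullMargin_pos hpos S x).ne'
    have h2 := (fullMargin_pos hpos T x).ne'
    have h3 := (fullMargin_pos hpos (S ∩ T) x).ne'
    have h4 := (fullMargin_pos hpos (S ∪ T) x).ne'
    simp only [hr]
    rw [Real.log_div (mul_ne_zero h1 (div_ne_zero h2 h3)) h4,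
      Real.log_mul h1 (div_ne_zero h2 h3), Real.log_div h2 h3]
    ring
  linarith

/-! ### The local Gibbs distribution -/

/-- The unnormalised Gibbs weight of the first `K + ℓ + 1` sites,
`∏_{m ≤ K} p_{m,…,m+ℓ} / ∏_{m < K} p_{m+1,…,m+ℓ}`, defined by adding one site at a time. -/
def localWeight (p : (∀ i, X i) → ℝ) (ℓ : ℕ) : ℕ → (∀ i, X i) → ℝ
  | 0 => fun x => fullMargin p (chainInterval n 0 ℓ) x
  | K + 1 => fun x => localWeight p ℓ K x *
      (fullMargin p (chainInterval n (K + 1) (K + 1 + ℓ)) x /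
        fullMargin p (chainInterval n (K + 1) (K + ℓ)) x)

lemma dependsOnBlock_localWeight (p : (∀ i, X i) → ℝ) (ℓ K : ℕ) :
    DependsOnBlock (localWeight p ℓ K) (chainInterval n 0 (K + ℓ)) := by
  induction K with
  | zero => simpa [localWeight] using dependsOnBlock_fullMargin p (chainInterval n 0 ℓ)
  | succ K ih =>
    refine (ih.mono ?_).mul (((dependsOnBlock_fullMargin p _).mono ?_).div
      ((dependsOnBlock_fullMargin p _).mono ?_)) <;>
    · intro i
      simp only [chainInterval, Finset.mem_filter, Finset.mem_univ, true_and]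
      omega

/-- The weight of the first `K + ℓ + 1` sites has total mass one on those sites; summing over full
configurations counts the remaining sites freely. -/
lemma sum_localWeight [∀ i, Nonempty (X i)] {p : (∀ i, X i) → ℝ}
    (hpos : ∀ x, 0 < p x) (hsum : ∑ x, p x = 1) (ℓ K : ℕ) :
    ∑ x, localWeight p ℓ K x = outerCard X (chainInterval n 0 (K + ℓ)) := by
  induction K with
  | zero => simpa [localWeight] using sum_fullMargin hsum (chainInterval n 0 ℓ)
  | succ K ih =>
    have h := sum_mul_fullMargin_div hpos (T := chainInterval n (K + 1) (K + 1 + ℓ))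
      (dependsOnBlock_localWeight p ℓ K)
    have hi : chainInterval n 0 (K + ℓ) ∩ chainInterval n (K + 1) (K + 1 + ℓ)
        = chainInterval n (K + 1) (K + ℓ) := by
      ext i
      simp only [chainInterval, Finset.mem_inter, Finset.mem_filter, Finset.mem_univ, true_and]
      omega
    have hu : chainInterval n 0 (K + ℓ) ∪ chainInterval n (K + 1) (K + 1 + ℓ)
        = chainInterval n 0 (K + 1 + ℓ) := by
      ext i
      simp only [chainInterval, Finset.mem_union, Finset.mem_filter, Finset.mem_univ, true_and]
      omega
    rw [hi, hu, ih, mul_comm] at h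
    exact mul_right_cancel₀ (outerCard_pos _).ne' h

lemma localWeight_eq_exp {p : (∀ i, X i) → ℝ} (hpos : ∀ x, 0 < p x) (ℓ K : ℕ) (x : ∀ i, X i) :
    localWeight p ℓ K x = Real.exp
      (-((∑ m ∈ Finset.range (K + 1), -Real.log (fullMargin p (chainInterval n m (m + ℓ)) x))
        - ∑ m ∈ Finset.range K,
          -Real.log (fullMargin p (chainInterval n (m + 1) (m + ℓ)) x))) := by
  induction K with
  | zero => simp [localWeight, Real.exp_log (fullMargin_pos hpos _ x)]
  | succ K ih =>
    rw [Finset.sum_range_succ _ (K + 1), Finset.sum_range_succ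
      (fun m => -Real.log (fullMargin p (chainInterval n (m + 1) (m + ℓ)) x)) K]
    simp only [localWeight]
    rw [ih]
    rw [← Real.exp_log (div_pos (fullMargin_pos hpos (chainInterval n (K + 1) (K + 1 + ℓ)) x)
      (fullMargin_pos hpos (chainInterval n (K + 1) (K + ℓ)) x)), ← Real.exp_add,
      Real.log_div (fullMargin_pos hpos _ x).ne' (fullMargin_pos hpos _ x).ne']
    congr 1
    ring

lemma chainInterval_zero_eq_univ {b : ℕ} (h : n ≤ b + 1) :
    chainInterval n 0 b = Finset.univ := by
  ext i
  have := i.2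
  simp only [chainInterval, Finset.mem_filter, Finset.mem_univ, true_and, iff_true]
  omega

lemma gibbsApprox_eq [∀ i, Nonempty (X i)] {p : (∀ i, X i) → ℝ}
    (hpos : ∀ x, 0 < p x) (hsum : ∑ x, p x = 1) {ℓ K : ℕ} (hK : n = K + 1 + ℓ)
    (x : ∀ i, X i) : gibbsApprox p ℓ x = Real.exp (-localHam p ℓ x) := by
  have h : ∀ x, Real.exp (-localHam p ℓ x) = localWeight p ℓ K x := fun x => by
    rw [localWeight_eq_exp hpos, localHam, show n - ℓ = K + 1 by omega, Nat.add_sub_cancel]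
  have hZ : ∑ x', Real.exp (-localHam p ℓ x') = 1 := by
    simp only [h]
    rw [sum_localWeight hpos hsum, chainInterval_zero_eq_univ (by omega), outerCard_univ]
  rw [gibbsApprox, hZ, div_one]

/-- The number `K = n - ℓ - 1` is carried as a variable to avoid truncated subtraction. -/
lemma relEnt_gibbsApprox_eq [∀ i, Nonempty (X i)] {p : (∀ i, X i) → ℝ}
    (hpos : ∀ x, 0 < p x) (hsum : ∑ x, p x = 1) {ℓ K : ℕ} (hK : n = K + 1 + ℓ) :
    relEnt p (gibbsApprox p ℓ)
      = (∑ m ∈ Finset.range (K + 1), blockEntropy p (chainInterval n m (m + ℓ)))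
        - (∑ m ∈ Finset.range K, blockEntropy p (chainInterval n (m + 1) (m + ℓ)))
        - blockEntropy p Finset.univ := by
  have h : ∀ x, p x * Real.log (p x / gibbsApprox p ℓ x)
      = (∑ m ∈ Finset.range (K + 1),
          -(p x * Real.log (fullMargin p (chainInterval n m (m + ℓ)) x)))
        - (∑ m ∈ Finset.range K,
          -(p x * Real.log (fullMargin p (chainInterval n (m + 1) (m + ℓ)) x)))
        - -(p x * Real.log (fullMargin p Finset.univ x)) := fun x => by
    rw [gibbsApprox_eq hpos hsum hK, Real.log_div (hpos x).ne' (Real.exp_pos _).ne',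
      Real.log_exp, localHam, show n - ℓ = K + 1 by omega, Nat.add_sub_cancel, fullMargin_univ]
    simp only [← mul_neg, ← Finset.mul_sum]
    ring
  simp only [relEnt, h, blockEntropy_eq]
  rw [Finset.sum_sub_distrib, Finset.sum_sub_distrib, Finset.sum_comm,
    Finset.sum_comm (s := Finset.univ) (t := Finset.range K)]
  simp only [Finset.sum_neg_distrib]

end

/-- if `p` is strictly positive on a chain of `n` sites and there is a
function `ξ : ℕ → ℝ` (independent of `|A|` and `|C|`) with `I_p(A:C|B) ≤ ξ(|B|)` for every
contiguous tripartition `A, B, C` (in this order) of the chain, then for `1 ≤ ℓ ≤ n−2`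
the `(ℓ+1)`-local Gibbs approximation satisfies
`S(p‖p^ℓ) ≤ (n−ℓ−1) ξ(ℓ) ≤ n ξ(ℓ)`. -/
theorem relEnt_gibbsApprox_le_of_cmi_bound {n : ℕ} {X : Fin n → Type*}
    [∀ i, Fintype (X i)] [∀ i, DecidableEq (X i)] [∀ i, Nonempty (X i)]
    (p : (∀ i, X i) → ℝ) (hpos : ∀ x, 0 < p x) (hsum : ∑ x : ∀ i, X i, p x = 1)
    (ξ : ℕ → ℝ)
    (hξ : ∀ a b : ℕ, a + b ≤ n →
      cmi p (Finset.univ.filter fun i : Fin n => (i : ℕ) < a)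
          (Finset.univ.filter fun i : Fin n => a ≤ (i : ℕ) ∧ (i : ℕ) < a + b)
          (Finset.univ.filter fun i : Fin n => a + b ≤ (i : ℕ)) ≤ ξ b)
    (ℓ : ℕ) (hℓ1 : 1 ≤ ℓ) (hℓ2 : ℓ ≤ n - 2) :
    relEnt p (gibbsApprox p ℓ) ≤ ((n - ℓ - 1 : ℕ) : ℝ) * ξ ℓ ∧
      ((n - ℓ - 1 : ℕ) : ℝ) * ξ ℓ ≤ (n : ℝ) * ξ ℓ := by
  -- for `A` empty the conditional mutual information vanishes
  have hξ0 : 0 ≤ ξ ℓ := by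
    refine le_trans (le_of_eq ?_) (hξ 0 ℓ (by omega))
    simp [cmi]
  refine ⟨?_, mul_le_mul_of_nonneg_right (by exact_mod_cast (by omega)) hξ0⟩
  obtain ⟨K, hK⟩ : ∃ K, n = K + 1 + ℓ := ⟨n - ℓ - 1, by omega⟩
  rw [relEnt_gibbsApprox_eq hpos hsum hK, show n - ℓ - 1 = K by omega, Finset.sum_range_succ']
  have htel := Finset.sum_range_sub (fun m => blockEntropy p (chainInterval n 0 (m + ℓ))) K
  simp only [zero_add, chainInterval_zero_eq_univ (show n ≤ K + ℓ + 1 by omega)] at htel ⊢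
  -- strong subadditivity for `{0,…,m+ℓ+1}` and `{m+1,…,n-1}` bounds the conditional mutual
  -- information of `{0,…,m}` and the single site `{m+ℓ+1}` by that of a tripartition of the chain
  have hterm : ∀ m ∈ Finset.range K,
      blockEntropy p (chainInterval n (m + 1) (m + 1 + ℓ))
        - blockEntropy p (chainInterval n (m + 1) (m + ℓ))
        - (blockEntropy p (chainInterval n 0 (m + 1 + ℓ))
          - blockEntropy p (chainInterval n 0 (m + ℓ))) ≤ ξ ℓ := by
    intro m hm
    have hm' := Finset.mem_range.1 hm
    have hc := hξ (m + 1) ℓ (by omega)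
    have hs := blockEntropy_submodular hpos hsum (chainInterval n 0 (m + 1 + ℓ))
      (chainInterval n (m + 1) n)
    have e1 : chainInterval n 0 (m + 1 + ℓ) ∩ chainInterval n (m + 1) n
        = chainInterval n (m + 1) (m + 1 + ℓ) := by
      ext i
      have := i.2
      simp only [chainInterval, Finset.mem_inter, Finset.mem_filter, Finset.mem_univ, true_and]
      omega
    have e2 : chainInterval n 0 (m + 1 + ℓ) ∪ chainInterval n (m + 1) n = Finset.univ := by
      ext i
      simp only [chainInterval, Finset.mem_union, Finset.mem_filter,
        Finset.mem_univ, true_and, iff_true]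
      have := i.2
      omega
    have e3 : ((Finset.univ.filter fun i : Fin n => (i : ℕ) < m + 1) ∪
        Finset.univ.filter fun i : Fin n => m + 1 ≤ (i : ℕ) ∧ (i : ℕ) < m + 1 + ℓ)
        = chainInterval n 0 (m + ℓ) := by
      ext i
      simp only [chainInterval, Finset.mem_union, Finset.mem_filter, Finset.mem_univ, true_and]
      omega
    have e4 : ((Finset.univ.filter fun i : Fin n => m + 1 ≤ (i : ℕ) ∧ (i : ℕ) < m + 1 + ℓ) ∪
        Finset.univ.filter fun i : Fin n => m + 1 + ℓ ≤ (i : ℕ))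
        = chainInterval n (m + 1) n := by
      ext i
      have := i.2
      simp only [chainInterval, Finset.mem_union, Finset.mem_filter, Finset.mem_univ, true_and]
      omega
    have e5 : (Finset.univ.filter fun i : Fin n => m + 1 ≤ (i : ℕ) ∧ (i : ℕ) < m + 1 + ℓ)
        = chainInterval n (m + 1) (m + ℓ) := by
      ext i
      simp only [chainInterval, Finset.mem_filter, Finset.mem_univ, true_and]
      omega
    have e6 : chainInterval n 0 (m + ℓ) ∪ (Finset.univ.filter fun i : Fin n => m + 1 + ℓ ≤ (i : ℕ))
        = Finset.univ := by
      ext i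
      simp only [chainInterval, Finset.mem_union, Finset.mem_filter,
        Finset.mem_univ, true_and, iff_true]
      have := i.2
      omega
    rw [cmi, e3, e4, e5, e6] at hc
    rw [e1, e2] at hs
    linarith
  have hall := Finset.sum_le_card_nsmul _ _ _ hterm
  rw [Finset.card_range, nsmul_eq_mul, Finset.sum_sub_distrib, Finset.sum_sub_distrib, htel]
    at hall
  linarith

end
end

section
/- Let {ρ_x}_{x=0}^{M−1} be density matrices on a complex Hilbert space of finite dimension D ≥ 2, and let {p_x}_{x=0}^{M−1} be nonnegative reals with Σ_x p_x = 1. Then Σ_{x=0}^{M−1} p_x √(λ_1↓(ρ_x) · λ_2↓(ρ_x)) ≤ (1 / (2√(log 2))) · √( Σ_{x=0}^{M−1} p_x S(ρ_x) ), where λ_1↓(ρ_x) ≥ λ_2↓(ρ_x) are the two largest eigenvalues of ρ_x and S is the von Neumann entropy (natural logarithm). -/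
/-!
Write `a = λ₁↓(ρ)` and `b = λ₂↓(ρ)`. The theorem follows from the pointwise bound
`4 log 2 · a b ≤ S(ρ)` and concavity of the square root (Jensen's inequality).

For the pointwise bound, every eigenvalue other than `a` is at most `1 - a`, so replacing `log λ_i`
by `log (1 - a)` in those terms of the entropy gives `S(ρ) ≥ h(a)`, where `h` is the binary entropy
(`binEntropy_le_sum_negMulLog`). The classical inequality `h(a) ≥ 4 log 2 · a (1 - a)`
(`four_log_two_mul_le_binEntropy`) together with `b ≤ 1 - a` finishes the argument.

The classical inequality is a second-derivative argument: the difference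
`f(p) = h(p) - 4 log 2 · p (1 - p)` has `f'' (p) = 8 log 2 - 1 / (p (1 - p))`, so it is concave on
`[0, c]` and convex on `[c, 1 - c]`, where `c (1 - c) = 1 / (8 log 2)`. It is symmetric about `1/2`
and vanishes at `0` and `1/2`. Convexity and symmetry give `f ≥ f(1/2) = 0` on `[c, 1 - c]`, and
then concavity gives `f ≥ min (f 0) (f c) ≥ 0` on `[0, c]`.
-/

open scoped BigOperators ComplexOrder
open Matrix

noncomputable section
attribute [local instance] Classical.propDecidable

/-- The `k`-th largest eigenvalue (`k` counted from `0`) of a Hermitian matrix;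
junk value `0` if the matrix is not Hermitian or `k` is out of range. -/
def eigD {D : ℕ} (M : Matrix (Fin D) (Fin D) ℂ) (k : ℕ) : ℝ :=
  if h : M.IsHermitian then
    (((List.ofFn h.eigenvalues).insertionSort (· ≤ ·)).reverse).getD k 0
  else 0

/-- Von Neumann entropy (natural logarithm, convention `0 log 0 = 0`). -/
def vnEntropy {D : ℕ} (M : Matrix (Fin D) (Fin D) ℂ) : ℝ :=
  if h : M.IsHermitian then -∑ i, h.eigenvalues i * Real.log (h.eigenvalues i)
  else 0

/-- The gap between the binary entropy and the parabola with the same values at `0`, `1/2`, `1`. -/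
def entropyGap (p : ℝ) : ℝ := Real.binEntropy p - 4 * Real.log 2 * (p * (1 - p))

lemma entropyGap_one_sub (p : ℝ) : entropyGap (1 - p) = entropyGap p := by
  simp only [entropyGap, Real.binEntropy_one_sub]
  ring

lemma continuous_entropyGap : Continuous entropyGap := by
  unfold entropyGap
  fun_prop

lemma hasDerivAt_entropyGap {p : ℝ} (h0 : 0 < p) (h1 : p < 1) :
    HasDerivAt entropyGap
      (Real.log (1 - p) - Real.log p - 4 * Real.log 2 * (1 - 2 * p)) p := by
  have h := (Real.hasDerivAt_binEntropy h0.ne' h1.ne).sub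
    (((hasDerivAt_id p).mul ((hasDerivAt_id p).const_sub 1)).const_mul (4 * Real.log 2))
  refine h.congr_deriv ?_
  simp only [id]
  ring

lemma hasDerivAt_deriv_entropyGap {p : ℝ} (h0 : 0 < p) (h1 : p < 1) :
    HasDerivAt (fun p => Real.log (1 - p) - Real.log p - 4 * Real.log 2 * (1 - 2 * p))
      (8 * Real.log 2 - 1 / (p * (1 - p))) p := by
  have h1' : 1 - p ≠ 0 := by linarith
  have h := ((((hasDerivAt_id p).const_sub 1).log h1').sub (Real.hasDerivAt_log h0.ne')).sub
    ((((hasDerivAt_id p).const_mul 2).const_sub 1).const_mul (4 * Real.log 2))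
  refine h.congr_deriv ?_
  simp only [id]
  field_simp
  ring

lemma entropyGap_nonneg {p : ℝ} (h0 : 0 ≤ p) (h1 : p ≤ 1) : 0 ≤ entropyGap p := by
  wlog hp : p ≤ 1 / 2 generalizing p
  · rw [← entropyGap_one_sub]
    exact this (by linarith) (by linarith) (by linarith)
  have hl : 1 / 2 < Real.log 2 := by linarith [Real.log_two_gt_d9]
  -- the inflection point: the smaller root of `c * (1 - c) = 1 / (8 * log 2)`
  obtain ⟨c, hc0, hc2, hc⟩ : ∃ c : ℝ, 0 < c ∧ c < 1 / 2 ∧ 8 * Real.log 2 * (c * (1 - c)) = 1 := by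
    have hpos : 0 < 1 - 1 / (2 * Real.log 2) := by
      rw [sub_pos, div_lt_one (by linarith)]
      linarith
    have hlt : 1 - 1 / (2 * Real.log 2) < 1 := by
      have : 0 < 1 / (2 * Real.log 2) := by positivity
      linarith
    refine ⟨(1 - √(1 - 1 / (2 * Real.log 2))) / 2, ?_, ?_, ?_⟩
    · have : √(1 - 1 / (2 * Real.log 2)) < 1 := by
        rw [Real.sqrt_lt' one_pos]
        simpa using hlt
      linarith
    · linarith [Real.sqrt_pos.2 hpos]
    · have hs := Real.sq_sqrt hpos.le
      have : 8 * Real.log 2 * ((1 - √(1 - 1 / (2 * Real.log 2))) / 2 *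
          (1 - (1 - √(1 - 1 / (2 * Real.log 2))) / 2)) =
          2 * Real.log 2 * (1 - √(1 - 1 / (2 * Real.log 2)) ^ 2) := by ring
      rw [this, hs]
      field_simp
      ring
  have hconv : ConvexOn ℝ (Set.Icc c (1 - c)) entropyGap := by
    refine convexOn_of_hasDerivWithinAt2_nonneg (convex_Icc _ _)
      continuous_entropyGap.continuousOn
      (f' := fun p => Real.log (1 - p) - Real.log p - 4 * Real.log 2 * (1 - 2 * p))
      (f'' := fun p => 8 * Real.log 2 - 1 / (p * (1 - p))) ?_ ?_ ?_ <;>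
    · intro x hx
      rw [interior_Icc] at hx
      obtain ⟨hx1, hx2⟩ := hx
      first
      | exact (hasDerivAt_entropyGap (by linarith) (by linarith)).hasDerivWithinAt
      | exact (hasDerivAt_deriv_entropyGap (by linarith) (by linarith)).hasDerivWithinAt
      | rw [sub_nonneg, div_le_iff₀ (mul_pos (by linarith) (by linarith)), ← hc]
        gcongr 8 * Real.log 2 * ?_
        nlinarith
  have hconc : ConcaveOn ℝ (Set.Icc 0 c) entropyGap := by
    refine concaveOn_of_hasDerivWithinAt2_nonpos (convex_Icc _ _)
      continuous_entropyGap.continuousOn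
      (f' := fun p => Real.log (1 - p) - Real.log p - 4 * Real.log 2 * (1 - 2 * p))
      (f'' := fun p => 8 * Real.log 2 - 1 / (p * (1 - p))) ?_ ?_ ?_ <;>
    · intro x hx
      rw [interior_Icc] at hx
      obtain ⟨hx1, hx2⟩ := hx
      first
      | exact (hasDerivAt_entropyGap (by linarith) (by linarith)).hasDerivWithinAt
      | exact (hasDerivAt_deriv_entropyGap (by linarith) (by linarith)).hasDerivWithinAt
      | rw [sub_nonpos, le_div_iff₀ (mul_pos (by linarith) (by linarith)), ← hc]
        gcongr 8 * Real.log 2 * ?_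
        nlinarith
  have hmid : ∀ x, c ≤ x → x ≤ 1 / 2 → 0 ≤ entropyGap x := by
    intro x hx1 hx2
    have h := hconv.2 (show x ∈ Set.Icc c (1 - c) from ⟨hx1, by linarith⟩)
      (show 1 - x ∈ Set.Icc c (1 - c) from ⟨by linarith, by linarith⟩)
      (show (0 : ℝ) ≤ 1 / 2 by norm_num) (show (0 : ℝ) ≤ 1 / 2 by norm_num) (by norm_num)
    have hhalf : entropyGap (1 / 2) = 0 := by
      simp only [entropyGap, one_div, Real.binEntropy_two_inv]
      ring
    simp only [smul_eq_mul, entropyGap_one_sub] at h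
    rw [show 1 / 2 * x + 1 / 2 * (1 - x) = (1 / 2 : ℝ) by ring, hhalf] at h
    linarith
  rcases le_total c p with hcp | hcp
  · exact hmid p hcp hp
  · have h := hconc.min_le_of_mem_Icc (x := 0) (y := c) ⟨le_rfl, hc0.le⟩ ⟨hc0.le, le_rfl⟩ ⟨h0, hcp⟩
    refine le_trans (le_min ?_ (hmid c le_rfl hc2.le)) h
    simp [entropyGap]

lemma four_log_two_mul_le_binEntropy {p : ℝ} (h0 : 0 ≤ p) (h1 : p ≤ 1) :
    4 * Real.log 2 * (p * (1 - p)) ≤ Real.binEntropy p :=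
  sub_nonneg.1 (entropyGap_nonneg h0 h1)

lemma neg_sum_mul_log_le_sum_negMulLog {s : ℝ} (L : List ℝ) (h0 : ∀ x ∈ L, 0 ≤ x)
    (hs : ∀ x ∈ L, x ≤ s) : -(L.sum * Real.log s) ≤ (L.map Real.negMulLog).sum := by
  induction L with
  | nil => simp
  | cons x L ih =>
    have ih' := ih (fun y hy => h0 y (by simp [hy])) (fun y hy => hs y (by simp [hy]))
    have hx0 := h0 x (by simp)
    have hxs := hs x (by simp)
    have hx : x * Real.log x ≤ x * Real.log s := by
      rcases hx0.eq_or_lt with rfl | hpos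
      · simp
      · exact mul_le_mul_of_nonneg_left (Real.log_le_log hpos hxs) hx0
    rw [List.map_cons, List.sum_cons, List.sum_cons, Real.negMulLog.eq_1 x]
    linarith

/-- Merging all outcomes of a probability vector except the first does not increase the entropy. -/
lemma binEntropy_le_sum_negMulLog (a : ℝ) (L : List ℝ) (h0 : ∀ x ∈ L, 0 ≤ x)
    (hsum : a + L.sum = 1) :
    Real.binEntropy a ≤ ((a :: L).map Real.negMulLog).sum := by
  have hL : L.sum = 1 - a := by linarith
  have h := neg_sum_mul_log_le_sum_negMulLog (s := 1 - a) L h0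
    (fun x hx => hL ▸ List.single_le_sum h0 x hx)
  rw [hL] at h
  rw [Real.binEntropy_eq_negMulLog_add_negMulLog_one_sub, List.map_cons, List.sum_cons,
    Real.negMulLog.eq_1 (1 - a)]
  linarith

/-- The pointwise bound `4 log 2 · λ₁↓ λ₂↓ ≤ S`. -/
lemma four_log_two_mul_eigD_le_vnEntropy {D : ℕ} (hD : 2 ≤ D) (A : Matrix (Fin D) (Fin D) ℂ)
    (hA : A.PosSemidef) (htr : A.trace = 1) :
    4 * Real.log 2 * (eigD A 0 * eigD A 1) ≤ vnEntropy A := by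
  have hH : A.IsHermitian := hA.1
  simp only [eigD, vnEntropy, dif_pos hH]
  set L := ((List.ofFn hH.eigenvalues).insertionSort (· ≤ ·)).reverse with hLdef
  have hperm : L.Perm (List.ofFn hH.eigenvalues) :=
    (List.reverse_perm _).trans (List.perm_insertionSort _ _)
  have hsum : L.sum = 1 := by
    rw [hperm.sum_eq, List.sum_ofFn]
    have h := hH.trace_eq_sum_eigenvalues
    rw [htr] at h
    exact Complex.ofReal_injective (by simpa using h.symm)
  have hS : -∑ i, hH.eigenvalues i * Real.log (hH.eigenvalues i) =
      (L.map Real.negMulLog).sum := by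
    rw [(hperm.map _).sum_eq, List.map_ofFn, List.sum_ofFn, ← Finset.sum_neg_distrib]
    simp [Real.negMulLog]
  have h0 : ∀ x ∈ L, 0 ≤ x := by
    intro x hx
    obtain ⟨i, rfl⟩ := List.mem_ofFn.1 (hperm.mem_iff.1 hx)
    exact hA.eigenvalues_nonneg i
  have hlen : L.length = D := by rw [hperm.length_eq, List.length_ofFn]
  rw [hS]
  clear_value L
  match L, hlen, hsum, h0 with
  | [], hlen, _, _ => simp at hlen; omega
  | [_], hlen, _, _ => simp at hlen; omega
  | a :: b :: T, _, hsum, h0 =>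
    have ha : 0 ≤ a := h0 a (by simp)
    have hbT : ∀ x ∈ b :: T, 0 ≤ x := fun x hx => h0 x (List.mem_cons_of_mem _ hx)
    have hb : b ≤ (b :: T).sum := List.single_le_sum hbT b (by simp)
    rw [List.sum_cons] at hsum
    have hb0 : 0 ≤ b := hbT b (by simp)
    have h := binEntropy_le_sum_negMulLog a (b :: T) hbT hsum
    have h' := four_log_two_mul_le_binEntropy ha (by linarith)
    refine le_trans ?_ (h'.trans h)
    have hl : 0 < Real.log 2 := Real.log_pos (by norm_num)
    simp only [List.getD_cons_zero, List.getD_cons_succ]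
    gcongr
    linarith

/-- for density matrices `ρ_x` on a `D`-dimensional space (`D ≥ 2`) and a
probability distribution `p`,
`Σ_x p_x √(λ₁↓(ρ_x) λ₂↓(ρ_x)) ≤ (1/(2 √(log 2))) √(Σ_x p_x S(ρ_x))`. -/
theorem average_sqrt_top_two_eigenvalues_le {D M : ℕ} (hD : 2 ≤ D)
    (ρ : Fin M → Matrix (Fin D) (Fin D) ℂ)
    (hρ : ∀ x, (ρ x).PosSemidef) (htr : ∀ x, (ρ x).trace = 1)
    (p : Fin M → ℝ) (hp : ∀ x, 0 ≤ p x) (hsum : ∑ x, p x = 1) :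
    ∑ x, p x * Real.sqrt (eigD (ρ x) 0 * eigD (ρ x) 1) ≤
      (1 / (2 * Real.sqrt (Real.log 2))) * Real.sqrt (∑ x, p x * vnEntropy (ρ x)) := by
  have hl : 0 < Real.log 2 := Real.log_pos (by norm_num)
  have hpt : ∀ x, eigD (ρ x) 0 * eigD (ρ x) 1 ≤ vnEntropy (ρ x) / (4 * Real.log 2) := fun x => by
    rw [le_div_iff₀ (by positivity), mul_comm]
    exact four_log_two_mul_eigD_le_vnEntropy hD _ (hρ x) (htr x)
  have hS : ∀ x, 0 ≤ vnEntropy (ρ x) := by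
    intro x
    have hH : (ρ x).IsHermitian := (hρ x).1
    have htr' : ∑ i, hH.eigenvalues i = 1 := by
      have h := hH.trace_eq_sum_eigenvalues
      rw [htr x] at h
      exact Complex.ofReal_injective (by simpa using h.symm)
    have hnn := (hρ x).eigenvalues_nonneg
    rw [vnEntropy, dif_pos hH, ← Finset.sum_neg_distrib]
    refine Finset.sum_nonneg fun i _ => neg_nonneg.2 ?_
    refine mul_nonpos_of_nonneg_of_nonpos (hnn i) (Real.log_nonpos (hnn i) ?_)
    rw [← htr']
    exact Finset.single_le_sum (fun j _ => hnn j) (Finset.mem_univ i)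
  calc ∑ x, p x * √(eigD (ρ x) 0 * eigD (ρ x) 1)
      ≤ ∑ x, p x * √(vnEntropy (ρ x) / (4 * Real.log 2)) := by
        gcongr with x
        · exact hp x
        · exact hpt x
    _ ≤ √(∑ x, p x * (vnEntropy (ρ x) / (4 * Real.log 2))) := by
        simpa only [smul_eq_mul] using
          Real.strictConcaveOn_sqrt.concaveOn.le_map_sum (t := Finset.univ) (w := p)
            (p := fun x => vnEntropy (ρ x) / (4 * Real.log 2)) (fun x _ => hp x) hsum
            (fun x _ => Set.mem_Ici.2 (div_nonneg (hS x) (by positivity)))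
    _ = 1 / (2 * √(Real.log 2)) * √(∑ x, p x * vnEntropy (ρ x)) := by
        simp only [← mul_div_assoc]
        rw [← Finset.sum_div, Real.sqrt_div' _ (by positivity), Real.sqrt_mul (by norm_num),
          show √(4 : ℝ) = 2 by rw [Real.sqrt_eq_iff_mul_self_eq] <;> norm_num]
        ring

end
end
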